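/- arXiv:2504.03025 — 2 statements merged into one kernel-verified Lean document; each statement's English description precedes it below -/
import Mathlib

section
/- Let α, β, ε be real numbers with 0 < α ≤ β and ε > 0. Then the integral of w² over the set {(w,h) ∈ ℝ² : w > 0, h > 0, w·h ≤ 1, α²·w ≤ ε²·h, ε²·h ≤ β²·w} with respect to two-dimensional Lebesgue measure equals (ε²/4)·(1/α² − 1/β²). -/
open MeasureTheory

/-!
With `a = ε / β` and `b = ε / α` the band becomes `{w, h > 0, w h ≤ 1, w ≤ b² h, a² h ≤ w}`.
Its slice at `w` is empty unless `0 < w ≤ b`, and is then the segment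
`w / b² ≤ h ≤ min (1 / w) (w / a²)`, whose upper end is `w / a²` for `w ≤ a` and `1 / w` for
`a ≤ w`. Since the band is bounded, Fubini applies and gives
`∫₀ᵃ (1/a² - 1/b²) w³ dw + ∫ₐᵇ (w - w³/b²) dw = (b² - a²) / 4`.
-/

/-- The band in terms of `a` and `b`, the abscissae at which the hyperbola `w h = 1` meets the
two bounding lines `w = a² h` and `w = b² h`. -/
def band (a b : ℝ) : Set (ℝ × ℝ) :=
  {p | 0 < p.1 ∧ 0 < p.2 ∧ p.1 * p.2 ≤ 1 ∧ p.1 ≤ b ^ 2 * p.2 ∧ a ^ 2 * p.2 ≤ p.1}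

lemma measurableSet_band (a b : ℝ) : MeasurableSet (band a b) := by
  unfold band
  measurability

lemma le_of_mem_band {a b : ℝ} (hb : 0 < b) {p : ℝ × ℝ} (hp : p ∈ band a b) : p.1 ≤ b := by
  obtain ⟨h1, -, h3, h4, -⟩ := hp
  have : p.1 ^ 2 ≤ b ^ 2 := by
    nlinarith [mul_le_mul_of_nonneg_left h4 h1.le, mul_le_mul_of_nonneg_left h3 (sq_nonneg b)]
  exact (sq_le_sq₀ h1.le hb.le).1 this

lemma integrableOn_band {a b : ℝ} (ha : 0 < a) (hb : 0 < b) :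
    IntegrableOn (fun p : ℝ × ℝ => p.1 ^ 2) (band a b) := by
  have hc : Continuous (fun p : ℝ × ℝ => p.1 ^ 2) := by fun_prop
  refine (hc.integrableOn_Icc (a := ((0, 0) : ℝ × ℝ)) (b := (b, b / a ^ 2))).mono_set ?_
  intro p hp
  have hpb := le_of_mem_band hb hp
  obtain ⟨h1, h2, -, -, h5⟩ := hp
  refine ⟨⟨h1.le, h2.le⟩, hpb, ?_⟩
  change p.2 ≤ b / a ^ 2
  rw [le_div_iff₀ (by positivity)]
  linarith

lemma slice_band {a b w : ℝ} (ha : 0 < a) (hb : 0 < b) (hw : 0 < w) :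
    Prod.mk w ⁻¹' band a b = Set.Icc (w / b ^ 2) (min (1 / w) (w / a ^ 2)) := by
  ext h
  simp only [band, Set.mem_preimage, Set.mem_ofPred_eq, Set.mem_Icc, le_min_iff]
  rw [div_le_iff₀ (by positivity), le_div_iff₀ hw, le_div_iff₀ (by positivity),
    mul_comm w h, mul_comm (b ^ 2) h, mul_comm (a ^ 2) h]
  constructor
  · rintro ⟨-, -, h3, h4, h5⟩
    exact ⟨h4, h3, h5⟩
  · rintro ⟨h4, h3, h5⟩
    exact ⟨hw, pos_of_mul_pos_left (hw.trans_le h4) (by positivity), h3, h4, h5⟩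

/-- The inner Fubini integral; outside `0 < w ≤ b` the slice of the band is empty. -/
lemma integral_slice_band {a b : ℝ} (ha : 0 < a) (hab : a ≤ b) (w : ℝ) :
    ∫ h, (band a b).indicator (fun p : ℝ × ℝ => p.1 ^ 2) (w, h) =
      (Set.Ioc 0 b).indicator (fun w => w ^ 2 * (min (1 / w) (w / a ^ 2) - w / b ^ 2)) w := by
  have hb : 0 < b := ha.trans_le hab
  by_cases hw : w ∈ Set.Ioc 0 b
  · rw [Set.indicator_of_mem hw]
    have hle : w / b ^ 2 ≤ min (1 / w) (w / a ^ 2) := by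
      have h0 := hw.1
      refine le_min ?_ (by gcongr)
      rw [div_le_div_iff₀ (by positivity) h0]
      nlinarith [hw.2]
    have : (fun h => (band a b).indicator (fun p : ℝ × ℝ => p.1 ^ 2) (w, h)) =
        (Set.Icc (w / b ^ 2) (min (1 / w) (w / a ^ 2))).indicator (fun _ => w ^ 2) := by
      rw [← slice_band ha hb hw.1]
      rfl
    rw [this, integral_indicator measurableSet_Icc, setIntegral_const,
      Real.volume_real_Icc_of_le hle, smul_eq_mul, mul_comm]
  · rw [Set.indicator_of_notMem hw]
    have : ∀ h, (band a b).indicator (fun p : ℝ × ℝ => p.1 ^ 2) (w, h) = 0 := fun h =>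
      Set.indicator_of_notMem (fun hp => hw ⟨hp.1, le_of_mem_band hb hp⟩) _
    simp [this]

lemma integral_band {a b : ℝ} (ha : 0 < a) (hab : a ≤ b) :
    ∫ p in band a b, p.1 ^ 2 = (b ^ 2 - a ^ 2) / 4 := by
  have hb : 0 < b := ha.trans_le hab
  have hint := (integrable_indicator_iff (measurableSet_band a b)).2 (integrableOn_band ha hb)
  rw [← integral_indicator (measurableSet_band a b), Measure.volume_eq_prod,
    integral_prod _ (by rwa [← Measure.volume_eq_prod])]
  simp_rw [integral_slice_band ha hab]
  rw [integral_indicator measurableSet_Ioc, ← Set.Ioc_union_Ioc_eq_Ioc ha.le hab]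
  have e1 : Set.EqOn (fun w : ℝ => w ^ 2 * (min (1 / w) (w / a ^ 2) - w / b ^ 2))
      (fun w => (1 / a ^ 2 - 1 / b ^ 2) * w ^ 3) (Set.Ioc 0 a) := by
    intro w hw
    have h0 := hw.1
    have : w / a ^ 2 ≤ 1 / w := by
      rw [div_le_div_iff₀ (by positivity) h0]
      nlinarith [hw.2]
    simp only [min_eq_right this]
    ring
  have e2 : Set.EqOn (fun w : ℝ => w ^ 2 * (min (1 / w) (w / a ^ 2) - w / b ^ 2))
      (fun w => w - 1 / b ^ 2 * w ^ 3) (Set.Ioc a b) := by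
    intro w hw
    have h0 : 0 < w := ha.trans hw.1
    have : 1 / w ≤ w / a ^ 2 := by
      rw [div_le_div_iff₀ h0 (by positivity)]
      nlinarith [hw.1]
    simp only [min_eq_left this]
    field_simp
  have c1 : Continuous (fun w : ℝ => (1 / a ^ 2 - 1 / b ^ 2) * w ^ 3) := by fun_prop
  have c2 : Continuous (fun w : ℝ => w - 1 / b ^ 2 * w ^ 3) := by fun_prop
  rw [setIntegral_union (Set.Ioc_disjoint_Ioc_of_le le_rfl) measurableSet_Ioc
      ((integrableOn_congr_fun e1 measurableSet_Ioc).2 c1.integrableOn_Ioc)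
      ((integrableOn_congr_fun e2 measurableSet_Ioc).2 c2.integrableOn_Ioc),
    setIntegral_congr_fun measurableSet_Ioc e1, setIntegral_congr_fun measurableSet_Ioc e2,
    ← intervalIntegral.integral_of_le ha.le, ← intervalIntegral.integral_of_le hab,
    intervalIntegral.integral_sub ((by fun_prop : Continuous fun w : ℝ => w).intervalIntegrable _ _)
      ((by fun_prop : Continuous fun w : ℝ => 1 / b ^ 2 * w ^ 3).intervalIntegrable _ _),
    intervalIntegral.integral_const_mul, intervalIntegral.integral_const_mul,
    integral_pow, integral_pow, integral_id]
  push_cast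
  field_simp
  ring

/-- The band integral `I_i` in the proof of Lemma 4.2 of the paper:
`∫ w² over {w>0, h>0, wh ≤ 1, α²w ≤ ε²h ≤ β²w} = (ε²/4)·(1/α² − 1/β²)`. -/
theorem integral_sq_over_band (α β ε : ℝ) (hα : 0 < α) (hαβ : α ≤ β) (hε : 0 < ε) :
    ∫ p in {p : ℝ × ℝ | 0 < p.1 ∧ 0 < p.2 ∧ p.1 * p.2 ≤ 1 ∧
        α ^ 2 * p.1 ≤ ε ^ 2 * p.2 ∧ ε ^ 2 * p.2 ≤ β ^ 2 * p.1},
        p.1 ^ 2 = ε ^ 2 / 4 * (1 / α ^ 2 - 1 / β ^ 2) := by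
  have hβ : 0 < β := hα.trans_le hαβ
  have hset : {p : ℝ × ℝ | 0 < p.1 ∧ 0 < p.2 ∧ p.1 * p.2 ≤ 1 ∧
      α ^ 2 * p.1 ≤ ε ^ 2 * p.2 ∧ ε ^ 2 * p.2 ≤ β ^ 2 * p.1} = band (ε / β) (ε / α) := by
    ext p
    simp only [band, Set.mem_ofPred_eq, div_pow, div_mul_eq_mul_div]
    rw [le_div_iff₀ (by positivity), div_le_iff₀ (by positivity), mul_comm p.1 (α ^ 2),
      mul_comm p.1 (β ^ 2)]
  rw [hset, integral_band (by positivity) (by gcongr)]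
  ring
end

section
/- Let q ≥ 1 be an integer, let 0 < α₁ ≤ α₂ ≤ ⋯ ≤ α_q and β₁, …, β_q > 0 be real numbers, and let ε > 0. Then the integral over {(w,h) ∈ ℝ² : w > 0, h > 0, w·h ≤ 1} of the function w²·[ Σ_{i=1}^{q-1} (Σ_{j=1}^{i} α_j β_j)·𝟙{α_i² w ≤ ε² h ≤ α_{i+1}² w} + (Σ_{j=1}^{q} α_j β_j)·𝟙{α_q² w ≤ ε² h} ] with respect to two-dimensional Lebesgue measure equals (ε²/4)·Σ_{j=1}^{q} β_j/α_j. -/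
open MeasureTheory

/-!
For `w > 0` and off the null lines `ε² h = α_{i+1}² w`, the indicator of the `i`-th band is the
difference of the indicators of the nested sectors `{α_i² w ≤ ε² h}` and `{α_{i+1}² w ≤ ε² h}`.
Abel summation (`area_weight_abel`) therefore turns the weight, almost everywhere, into
`Σ_j α_j β_j 𝟙{α_j² w ≤ ε² h}`. By Fubini (`sector_integral`), each sector contributes
`∫₀^{ε/a} w² (1/w - a² w/ε²) dw = ε²/(4a²)` with `a = α_j`, and `α_j β_j / α_j² = β_j / α_j`.
-/

/-- The part of the cone `{w, h > 0, w h ≤ 1}` on which `a² w ≤ ε² h`. -/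
def areaSector (ε a : ℝ) : Set (ℝ × ℝ) :=
  {p | (0 < p.1 ∧ 0 < p.2 ∧ p.1 * p.2 ≤ 1) ∧ a ^ 2 * p.1 ≤ ε ^ 2 * p.2}

lemma measurableSet_cone :
    MeasurableSet {p : ℝ × ℝ | 0 < p.1 ∧ 0 < p.2 ∧ p.1 * p.2 ≤ 1} := by
  have h1 : MeasurableSet {p : ℝ × ℝ | 0 < p.1} := measurableSet_lt (by fun_prop) (by fun_prop)
  have h2 : MeasurableSet {p : ℝ × ℝ | 0 < p.2} := measurableSet_lt (by fun_prop) (by fun_prop)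
  have h3 : MeasurableSet {p : ℝ × ℝ | p.1 * p.2 ≤ 1} :=
    measurableSet_le (by fun_prop) (by fun_prop)
  exact h1.inter (h2.inter h3)

lemma measurableSet_areaSector (ε a : ℝ) : MeasurableSet (areaSector ε a) := by
  have h : MeasurableSet {p : ℝ × ℝ | a ^ 2 * p.1 ≤ ε ^ 2 * p.2} :=
    measurableSet_le (by fun_prop) (by fun_prop)
  exact measurableSet_cone.inter h

/-- The vertical slice of a sector at abscissa `w > 0` is the segment `[a² w/ε², 1/w]`, which is
nonempty exactly when `w ≤ ε/a`; for `w ≤ 0` the slice is empty. -/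
lemma areaSector_slice {ε a : ℝ} (hε : 0 < ε) (ha : 0 < a) (w : ℝ) :
    (fun h => (areaSector ε a).indicator (fun p : ℝ × ℝ => p.1 ^ 2) (w, h)) =
      if w ∈ Set.Ioc 0 (ε / a) then
        (Set.Icc (a ^ 2 * w / ε ^ 2) (1 / w)).indicator (fun _ => w ^ 2)
      else 0 := by
  have hε2 : 0 < ε ^ 2 := by positivity
  funext h
  split_ifs with hw
  · obtain ⟨hw0, -⟩ := hw
    have key : (w, h) ∈ areaSector ε a ↔ h ∈ Set.Icc (a ^ 2 * w / ε ^ 2) (1 / w) := by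
      simp only [areaSector, Set.mem_ofPred_eq, Set.mem_Icc, div_le_iff₀ hε2, le_div_iff₀ hw0]
      constructor
      · rintro ⟨⟨-, -, h1⟩, h2⟩
        exact ⟨by linarith, by linarith⟩
      · rintro ⟨h1, h2⟩
        have : 0 < h * ε ^ 2 := lt_of_lt_of_le (by positivity) h1
        exact ⟨⟨hw0, pos_of_mul_pos_left this hε2.le, by linarith⟩, by linarith⟩
    by_cases hh : (w, h) ∈ areaSector ε a
    · rw [Set.indicator_of_mem hh, Set.indicator_of_mem (key.1 hh)]
    · rw [Set.indicator_of_notMem hh, Set.indicator_of_notMem (fun h' => hh (key.2 h'))]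
  · refine Set.indicator_of_notMem (fun hmem => hw ?_) _
    obtain ⟨⟨hw0, hh0, h1⟩, h2⟩ := hmem
    simp only at hw0 hh0 h1 h2
    refine ⟨hw0, ?_⟩
    rw [le_div_iff₀ ha]
    -- `(a w)² ≤ ε² w h ≤ ε²`
    refine abs_le_of_sq_le_sq' ?_ hε.le |>.2
    nlinarith [mul_le_mul_of_nonneg_left h2 hw0.le, mul_le_mul_of_nonneg_left h1 hε2.le]

lemma areaSector_slice_integral {ε a : ℝ} (hε : 0 < ε) (ha : 0 < a) (w : ℝ) :
    ∫ h, (areaSector ε a).indicator (fun p : ℝ × ℝ => p.1 ^ 2) (w, h) =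
      (Set.Ioc 0 (ε / a)).indicator (fun w => w - a ^ 2 / ε ^ 2 * w ^ 3) w := by
  rw [areaSector_slice hε ha w]
  split_ifs with hw
  · rw [Set.indicator_of_mem hw, integral_indicator measurableSet_Icc, setIntegral_const]
    obtain ⟨hw0, hw1⟩ := hw
    have hle : a ^ 2 * w / ε ^ 2 ≤ 1 / w := by
      rw [div_le_div_iff₀ (by positivity) hw0]
      rw [le_div_iff₀ ha] at hw1
      nlinarith [mul_pos hw0 ha]
    rw [Real.volume_real_Icc_of_le hle, smul_eq_mul]
    field_simp
  · rw [Set.indicator_of_notMem hw]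
    simp

lemma sector_integrable {ε a : ℝ} (hε : 0 < ε) (ha : 0 < a) :
    Integrable ((areaSector ε a).indicator (fun p : ℝ × ℝ => p.1 ^ 2)) := by
  rw [Measure.volume_eq_prod, integrable_prod_iff]
  · constructor
    · refine Filter.Eventually.of_forall fun w => ?_
      rw [areaSector_slice hε ha w]
      split_ifs
      · exact (integrable_indicator_iff measurableSet_Icc).2
          (integrableOn_const (by simp))
      · exact integrable_zero _ _ _
    · have hn : ∀ p, ‖(areaSector ε a).indicator (fun p : ℝ × ℝ => p.1 ^ 2) p‖ =
          (areaSector ε a).indicator (fun p : ℝ × ℝ => p.1 ^ 2) p := fun p =>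
        Real.norm_of_nonneg (Set.indicator_nonneg (fun _ _ => sq_nonneg _) p)
      simp only [hn, areaSector_slice_integral hε ha]
      refine (integrable_indicator_iff measurableSet_Ioc).2 ?_
      exact (Continuous.integrableOn_Icc (by fun_prop)).mono_set Set.Ioc_subset_Icc_self
  · exact (Measurable.indicator (by fun_prop)
      (measurableSet_areaSector ε a)).aestronglyMeasurable

lemma sector_integral {ε a : ℝ} (hε : 0 < ε) (ha : 0 < a) :
    ∫ p, (areaSector ε a).indicator (fun p : ℝ × ℝ => p.1 ^ 2) p = ε ^ 2 / (4 * a ^ 2) := by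
  have hi := sector_integrable hε ha
  rw [Measure.volume_eq_prod] at hi ⊢
  rw [integral_prod _ hi]
  simp only [areaSector_slice_integral hε ha]
  rw [integral_indicator measurableSet_Ioc,
    ← intervalIntegral.integral_of_le (by positivity), intervalIntegral.integral_sub
      (Continuous.intervalIntegrable (by fun_prop) _ _)
      (Continuous.intervalIntegrable (by fun_prop) _ _),
    intervalIntegral.integral_const_mul, integral_id, integral_pow]
  simp only [div_pow]
  field_simp
  norm_num
  ring

/-- Abel summation: with partial sums as weights, the differences `s i - s (i + 1)`
recombine to `Σ_j c_j s_j`. -/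
lemma area_weight_abel (c s : ℕ → ℝ) (n : ℕ) :
    ∑ i ∈ Finset.Icc 1 n, (∑ j ∈ Finset.Icc 1 i, c j) * (s i - s (i + 1))
        + (∑ j ∈ Finset.Icc 1 (n + 1), c j) * s (n + 1)
      = ∑ j ∈ Finset.Icc 1 (n + 1), c j * s j := by
  induction n with
  | zero => simp
  | succ n ih =>
    rw [Finset.sum_Icc_succ_top (by omega) (fun i => (∑ j ∈ Finset.Icc 1 i, c j) * _),
      Finset.sum_Icc_succ_top (by omega : 1 ≤ n + 1 + 1) c,
      Finset.sum_Icc_succ_top (by omega : 1 ≤ n + 1 + 1) (fun j => c j * s j), ← ih]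
    ring

lemma ae_off_line {ε : ℝ} (hε : 0 < ε) (c : ℝ) :
    ∀ᵐ p : ℝ × ℝ, ε ^ 2 * p.2 ≠ c * p.1 := by
  have hm : MeasurableSet {p : ℝ × ℝ | ε ^ 2 * p.2 = c * p.1} :=
    measurableSet_eq_fun (by fun_prop) (by fun_prop)
  have h0 : volume {p : ℝ × ℝ | ε ^ 2 * p.2 = c * p.1} = 0 := by
    rw [Measure.volume_eq_prod, Measure.measure_prod_null hm]
    refine Filter.Eventually.of_forall fun w => ?_
    refine measure_mono_null (t := {c * w / ε ^ 2}) (fun h hh => ?_) (by simp)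
    have hh' : ε ^ 2 * h = c * w := hh
    rw [Set.mem_singleton_iff, eq_div_iff (by positivity)]
    linarith
  rw [ae_iff]
  simpa using h0

/-- The two-variable core of Lemma 4.2 of the paper (area case): integrating `w²`
against the area weight over the area-one cone `{wh ≤ 1}` yields `(ε²/4)·Σ_j β_j/α_j`. -/
theorem integral_area_weight_wh (q : ℕ) (hq : 1 ≤ q) (α β : ℕ → ℝ)
    (hα0 : ∀ j ∈ Finset.Icc 1 q, 0 < α j)
    (hmono : ∀ i, 1 ≤ i → i < q → α i ≤ α (i + 1))
    (hβ0 : ∀ j ∈ Finset.Icc 1 q, 0 < β j)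
    (ε : ℝ) (hε : 0 < ε) :
    ∫ p in {p : ℝ × ℝ | 0 < p.1 ∧ 0 < p.2 ∧ p.1 * p.2 ≤ 1},
        p.1 ^ 2 *
          ((∑ i ∈ Finset.Icc 1 (q - 1), (∑ j ∈ Finset.Icc 1 i, α j * β j) *
              Set.indicator {x : ℝ × ℝ |
                  α i ^ 2 * x.1 ≤ ε ^ 2 * x.2 ∧ ε ^ 2 * x.2 ≤ α (i + 1) ^ 2 * x.1}
                (fun _ => (1 : ℝ)) p)
            + (∑ j ∈ Finset.Icc 1 q, α j * β j) *
              Set.indicator {x : ℝ × ℝ | α q ^ 2 * x.1 ≤ ε ^ 2 * x.2}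
                (fun _ => (1 : ℝ)) p)
      = ε ^ 2 / 4 * ∑ j ∈ Finset.Icc 1 q, β j / α j := by
  obtain ⟨n, rfl⟩ : ∃ n, q = n + 1 := ⟨q - 1, by omega⟩
  simp only [Nat.add_sub_cancel]
  rw [← integral_indicator measurableSet_cone]
  have hae : ∀ᵐ p : ℝ × ℝ, ∀ i : ℕ, ε ^ 2 * p.2 ≠ α (i + 1) ^ 2 * p.1 :=
    ae_all_iff.2 fun i => ae_off_line hε _
  calc
    _ = ∫ p : ℝ × ℝ, ∑ j ∈ Finset.Icc 1 (n + 1), (α j * β j) *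
          (areaSector ε (α j)).indicator (fun p : ℝ × ℝ => p.1 ^ 2) p := by
      refine integral_congr_ae ?_
      filter_upwards [hae] with p hp
      by_cases hS : p ∈ {p : ℝ × ℝ | 0 < p.1 ∧ 0 < p.2 ∧ p.1 * p.2 ≤ 1}
      · rw [Set.indicator_of_mem hS]
        have hw : 0 < p.1 := hS.1
        set s : ℕ → ℝ := fun j =>
          Set.indicator {x : ℝ × ℝ | α j ^ 2 * x.1 ≤ ε ^ 2 * x.2} (fun _ => (1 : ℝ)) p with hs
        have hband : ∀ i ∈ Finset.Icc 1 n, Set.indicator {x : ℝ × ℝ |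
            α i ^ 2 * x.1 ≤ ε ^ 2 * x.2 ∧ ε ^ 2 * x.2 ≤ α (i + 1) ^ 2 * x.1}
              (fun _ => (1 : ℝ)) p = s i - s (i + 1) := by
          intro i hi
          rw [Finset.mem_Icc] at hi
          have h0 : 0 < α i := hα0 i (Finset.mem_Icc.2 ⟨hi.1, by omega⟩)
          have h1 : α i ^ 2 * p.1 ≤ α (i + 1) ^ 2 * p.1 := by
            have := hmono i hi.1 (by omega)
            gcongr
          have h2 := hp i
          simp only [hs, Set.indicator_apply, Set.mem_ofPred_eq]
          rcases lt_or_gt_of_ne h2 with h3 | h3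
          · simp [h3.le, h3.not_ge]
          · simp [h3.le, h3.not_ge, h1.trans h3.le]
        rw [Finset.sum_congr rfl (fun i hi => by rw [hband i hi])]
        have habel := area_weight_abel (fun j => α j * β j) s n
        change p.1 ^ 2 * (_ + _ * s (n + 1)) = _
        rw [habel, Finset.mul_sum]
        refine Finset.sum_congr rfl fun j _ => ?_
        have hsec : p ∈ areaSector ε (α j) ↔ α j ^ 2 * p.1 ≤ ε ^ 2 * p.2 :=
          ⟨fun h => h.2, fun h => ⟨hS, h⟩⟩
        by_cases h : α j ^ 2 * p.1 ≤ ε ^ 2 * p.2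
        · rw [Set.indicator_of_mem (hsec.2 h)]
          simp only [hs, Set.indicator_apply, Set.mem_ofPred_eq, if_pos h]
          ring
        · rw [Set.indicator_of_notMem (fun h' => h (hsec.1 h'))]
          simp only [hs, Set.indicator_apply, Set.mem_ofPred_eq, if_neg h, mul_zero]
      · rw [Set.indicator_of_notMem hS]
        refine (Finset.sum_eq_zero fun j _ => ?_).symm
        rw [Set.indicator_of_notMem (fun h => hS h.1), mul_zero]
    _ = ∑ j ∈ Finset.Icc 1 (n + 1), (α j * β j) * (ε ^ 2 / (4 * α j ^ 2)) := by
      rw [integral_finsetSum _ fun j hj => (sector_integrable hε (hα0 j hj)).const_mul _]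
      refine Finset.sum_congr rfl fun j hj => ?_
      rw [integral_const_mul, sector_integral hε (hα0 j hj)]
    _ = _ := by
      rw [Finset.mul_sum]
      refine Finset.sum_congr rfl fun j hj => ?_
      have := hα0 j hj
      field_simp
end
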